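/- Let f(x)=x^6-2x^5+3x^4-4x^3+3x^2-2x+1 and g(x)=x^6+x^5-x^3+x+1, let A and B be their companion matrices viewed in GL(6,ℚ), and let X be the rational matrix with rows [0,0,0,-3,0,0], [0,3,-3,3,0,3/2], [0,-3,3,-3,0,3/2], [0,-6,-3,3,6,0], [-3/2,3,3,-3,-3,-3/2], [0,0,-3,0,0,0]. Set a = X⁻¹AX, b = X⁻¹BX, c = a⁻¹b, and define w₁=[a,b⁻¹], w₂=a³ca⁻³, w₃=a⁴ca⁻⁴, w₄=b³cb⁻³, w₅=w₂c⁻¹, w₆=[w₁,w₅], w₇=w₅⁴, w₈=b²cb⁻², w₉=[w₄,w₅], w₁₀=w₉⁴w₇⁻¹⁸, w₁₁=w₆⁴, w₁₂=w₁₁⁹w₁₀, w₁₃=[w₅,w₈], w₁₄=w₁₃²w₇³w₁₁⁻², w₁₅=w₁₄^1938 · w₁₂⁻⁷³, w₁₆=[w₃,w₁₅], w₁₇=w₁₅⁹w₁₆, w₁₈=w₃w₁₅w₃⁻¹w₁₇⁻¹, where [x,y]=xyx⁻¹y⁻¹. Then q₁ := (w₁₅⁸ w₁₈)⁻¹ equals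 I + 104727556800·E₁₆, and q₂ := w₁₇^(−15570) · q₁^77849 equals I + 17454592800·E₁₅ + 4363648200·E₂₆. -/

import Mathlib

/-!
The identity is a finite computation with rational matrices. What keeps it small is that `c` and
every `wₖ` with `k ≠ 1`, as well as `q₁`, has the form `1 + N` with `N * N = 0`:
for such a matrix `(1 + N) ^ n = 1 + n • N` for all integers `n` (`zpow_of_sq_zero`), so inverses
and the exponents `1938`, `-15570`, `77849` cost no more than a scalar multiplication. The inverses
of `a` and `b` are certified by exhibiting them, and the conjugations by their powers expand
into products (`mul_zpow_neg`). The remaining products of explicit matrices are evaluated in the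
kernel.
-/

open Matrix

/-- Group commutator [x,y] = x y x⁻¹ y⁻¹ (here for 6×6 rational matrices,
with ⁻¹ the matrix inverse). -/
noncomputable def com (x y : Matrix (Fin 6) (Fin 6) ℚ) : Matrix (Fin 6) (Fin 6) ℚ :=
  x * y * x⁻¹ * y⁻¹

/-- Companion matrix of f(x)=x⁶-2x⁵+3x⁴-4x³+3x²-2x+1, over ℚ. -/
noncomputable def matA : Matrix (Fin 6) (Fin 6) ℚ :=
  !![0,0,0,0,0,-1; 1,0,0,0,0,2; 0,1,0,0,0,-3; 0,0,1,0,0,4; 0,0,0,1,0,-3; 0,0,0,0,1,2]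

/-- Companion matrix of g(x)=x⁶+x⁵-x³+x+1, over ℚ. -/
noncomputable def matB : Matrix (Fin 6) (Fin 6) ℚ :=
  !![0,0,0,0,0,-1; 1,0,0,0,0,-1; 0,1,0,0,0,0; 0,0,1,0,0,1; 0,0,0,1,0,0; 0,0,0,0,1,-1]

/-- The change of basis matrix X. -/
noncomputable def matX : Matrix (Fin 6) (Fin 6) ℚ :=
  !![0,0,0,-3,0,0; 0,3,-3,3,0,3/2; 0,-3,3,-3,0,3/2; 0,-6,-3,3,6,0;
     -3/2,3,3,-3,-3,-3/2; 0,0,-3,0,0,0]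

noncomputable def a : Matrix (Fin 6) (Fin 6) ℚ := matX⁻¹ * matA * matX
noncomputable def b : Matrix (Fin 6) (Fin 6) ℚ := matX⁻¹ * matB * matX
noncomputable def c : Matrix (Fin 6) (Fin 6) ℚ := a⁻¹ * b
noncomputable def w₁ : Matrix (Fin 6) (Fin 6) ℚ := com a b⁻¹
noncomputable def w₂ : Matrix (Fin 6) (Fin 6) ℚ := a ^ 3 * c * a ^ (-3 : ℤ)
noncomputable def w₃ : Matrix (Fin 6) (Fin 6) ℚ := a ^ 4 * c * a ^ (-4 : ℤ)
noncomputable def w₄ : Matrix (Fin 6) (Fin 6) ℚ := b ^ 3 * c * b ^ (-3 : ℤ)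
noncomputable def w₅ : Matrix (Fin 6) (Fin 6) ℚ := w₂ * c⁻¹
noncomputable def w₆ : Matrix (Fin 6) (Fin 6) ℚ := com w₁ w₅
noncomputable def w₇ : Matrix (Fin 6) (Fin 6) ℚ := w₅ ^ 4
noncomputable def w₈ : Matrix (Fin 6) (Fin 6) ℚ := b ^ 2 * c * b ^ (-2 : ℤ)
noncomputable def w₉ : Matrix (Fin 6) (Fin 6) ℚ := com w₄ w₅
noncomputable def w₁₀ : Matrix (Fin 6) (Fin 6) ℚ := w₉ ^ 4 * w₇ ^ (-18 : ℤ)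
noncomputable def w₁₁ : Matrix (Fin 6) (Fin 6) ℚ := w₆ ^ 4
noncomputable def w₁₂ : Matrix (Fin 6) (Fin 6) ℚ := w₁₁ ^ 9 * w₁₀
noncomputable def w₁₃ : Matrix (Fin 6) (Fin 6) ℚ := com w₅ w₈
noncomputable def w₁₄ : Matrix (Fin 6) (Fin 6) ℚ := w₁₃ ^ 2 * w₇ ^ 3 * w₁₁ ^ (-2 : ℤ)
noncomputable def w₁₅ : Matrix (Fin 6) (Fin 6) ℚ := w₁₄ ^ 1938 * w₁₂ ^ (-73 : ℤ)
noncomputable def w₁₆ : Matrix (Fin 6) (Fin 6) ℚ := com w₃ w₁₅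
noncomputable def w₁₇ : Matrix (Fin 6) (Fin 6) ℚ := w₁₅ ^ 9 * w₁₆
noncomputable def w₁₈ : Matrix (Fin 6) (Fin 6) ℚ := w₃ * w₁₅ * w₃⁻¹ * w₁₇⁻¹
noncomputable def q₁ : Matrix (Fin 6) (Fin 6) ℚ := (w₁₅ ^ 8 * w₁₈)⁻¹

/-- Integer powers of a unipotent matrix of class two, `(M - 1) ^ 2 = 0`, are linear in the
exponent. -/
theorem zpow_of_sq_zero (M : Matrix (Fin 6) (Fin 6) ℚ) (h : (M - 1) * (M - 1) = 0) (n : ℤ) :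
    M ^ n = 1 + (n : ℚ) • (M - 1) := by
  have hpow : ∀ k : ℕ, M ^ k = 1 + (k : ℚ) • (M - 1) := by
    intro k
    induction k with
    | zero => simp
    | succ k ih =>
      have hM : M = 1 + (M - 1) := by abel
      rw [pow_succ, ih]
      conv_lhs => rw [hM]
      simp only [add_sub_cancel_left]
      rw [mul_add, mul_one, add_mul, one_mul, smul_mul_assoc, h, smul_zero, add_zero]
      push_cast
      rw [add_smul, one_smul, add_assoc]
  obtain ⟨k, rfl | rfl⟩ := n.eq_nat_or_neg
  · rw [zpow_natCast, hpow k, Int.cast_natCast]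
  · rw [Matrix.zpow_neg_natCast, hpow k]
    apply Matrix.inv_eq_right_inv
    simp only [Int.cast_neg, Int.cast_natCast, neg_smul, mul_add, add_mul, mul_neg, one_mul,
      mul_one, smul_mul_assoc, mul_smul_comm, h, smul_zero, add_zero]
    abel

theorem pow_of_sq_zero (M : Matrix (Fin 6) (Fin 6) ℚ) (h : (M - 1) * (M - 1) = 0) (n : ℕ) :
    M ^ n = 1 + (n : ℚ) • (M - 1) := by
  rw [← zpow_natCast, zpow_of_sq_zero M h, Int.cast_natCast]

theorem inv_of_sq_zero (M : Matrix (Fin 6) (Fin 6) ℚ) (h : (M - 1) * (M - 1) = 0) :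
    M⁻¹ = 1 - (M - 1) := by
  have := zpow_of_sq_zero M h (-1)
  rw [Matrix.zpow_neg_one] at this
  rw [this, Int.cast_neg, Int.cast_one, neg_smul, one_smul, ← sub_eq_add_neg]

theorem mul_zpow_neg (M C : Matrix (Fin 6) (Fin 6) ℚ) (n : ℕ) :
    M ^ n * C * M ^ (-(n : ℤ)) = M ^ n * C * M⁻¹ ^ n := by
  rw [Matrix.zpow_neg_natCast, Matrix.inv_pow']

theorem matX_inv :
    matX⁻¹ =
    !![1/3, -1/3, -1/3, -1/3, -2/3, -1/3; 1/3, 1/6, -1/6, 0, 0, -1/3; 0, 0, 0, 0, 0, -1/3;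
       -1/3, 0, 0, 0, 0, 0; 1/2, 1/6, -1/6, 1/6, 0, -1/2; 0, 1/3, 1/3, 0, 0, 0] := by
  apply Matrix.inv_eq_right_inv
  decide +kernel

theorem a_eq :
    a =
    !![1/2, 3, 1, 0, -3, -1/2; 1/2, -3/2, 0, 0, 1, 1/4; 1/2, -1, 1, 1, 1, 1/2;
       0, 0, -1, 0, 0, 0; 3/4, -5/2, -1/2, 0, 3/2, 3/4; 0, 1, 0, 0, 0, 1/2] := by
  rw [a, matX_inv]
  decide +kernel

theorem a_inv :
    a⁻¹ =
    !![1/2, 3, 0, 1, -1, 1/2; 0, 3/2, 0, 1/2, -1, 3/4; 0, 0, 0, -1, 0, 0;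
       0, -1, 1, 1, 0, -1/2; -1/4, 5/2, 0, 1/2, -3/2, 3/4; 0, -3, 0, -1, 2, 1/2] := by
  rw [a_eq]
  apply Matrix.inv_eq_right_inv
  decide +kernel

theorem b_eq :
    b =
    !![1/2, 3, 1, 0, -3, -1/2; 1/2, -3/2, 0, 0, 1, 1/4; 1/2, -1, -2, 1, 1, 1/2;
       0, 0, -1, 0, 0, 0; 3/4, -5/2, -1/2, 0, 3/2, 3/4; 0, 1, 0, 0, 0, 1/2] := by
  rw [b, matX_inv]
  decide +kernel

theorem b_inv :
    b⁻¹ =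
    !![1/2, 3, 0, 1, -1, 1/2; 0, 3/2, 0, 1/2, -1, 3/4; 0, 0, 0, -1, 0, 0;
       0, -1, 1, -2, 0, -1/2; -1/4, 5/2, 0, 1/2, -3/2, 3/4; 0, -3, 0, -1, 2, 1/2] := by
  rw [b_eq]
  apply Matrix.inv_eq_right_inv
  decide +kernel

theorem c_eq :
    c =
    !![1, 0, 0, 0, 0, 0; 0, 1, 0, 0, 0, 0; 0, 0, 1, 0, 0, 0;
       0, 0, -3, 1, 0, 0; 0, 0, 0, 0, 1, 0; 0, 0, 0, 0, 0, 1] := by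
  rw [c, a_inv, b_eq]
  decide +kernel

theorem c_sq_zero : (c - 1) * (c - 1) = 0 := by
  rw [c_eq]
  decide +kernel

theorem b_isUnit_det : IsUnit b.det := by
  apply Matrix.isUnit_det_of_right_inverse (B := b⁻¹)
  rw [b_inv, b_eq]
  decide +kernel

theorem w₁_eq :
    w₁ =
    !![1, 0, 0, 0, 0, 0; 0, 1, 0, 0, 0, 0; 0, 0, 10, -3, 0, 0;
       0, 0, -3, 1, 0, 0; 0, 0, 0, 0, 1, 0; 0, 0, 0, 0, 0, 1] := by
  rw [w₁, com, Matrix.nonsing_inv_nonsing_inv b b_isUnit_det, a_inv, b_inv, a_eq, b_eq]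
  decide +kernel

theorem w₁_inv :
    w₁⁻¹ =
    !![1, 0, 0, 0, 0, 0; 0, 1, 0, 0, 0, 0; 0, 0, 1, 3, 0, 0;
       0, 0, 3, 10, 0, 0; 0, 0, 0, 0, 1, 0; 0, 0, 0, 0, 0, 1] := by
  rw [w₁_eq]
  apply Matrix.inv_eq_right_inv
  decide +kernel

theorem w₂_eq :
    w₂ =
    !![1, -9, 9, 0, 0, -27/2; 0, 1, 0, 0, 0, 0; 0, 0, 1, 0, 0, 0;
       0, 3, -3, 1, 0, 9/2; 0, 3/2, -3/2, 0, 1, 9/4; 0, 0, 0, 0, 0, 1] := by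
  rw [w₂, show (-3 : ℤ) = -((3 : ℕ) : ℤ) from rfl, mul_zpow_neg, a_inv, a_eq, c_eq]
  decide +kernel

theorem w₃_eq :
    w₃ =
    !![1, 27, 0, 0, -18, -27/2; 0, 10, 0, 0, -6, -9/2; 0, 0, 1, 0, 0, 0;
       0, 0, 0, 1, 0, 0; 0, 27/2, 0, 0, -8, -27/4; 0, 0, 0, 0, 0, 1] := by
  rw [w₃, show (-4 : ℤ) = -((4 : ℕ) : ℤ) from rfl, mul_zpow_neg, a_inv, a_eq, c_eq]
  decide +kernel

theorem w₃_sq_zero : (w₃ - 1) * (w₃ - 1) = 0 := by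
  rw [w₃_eq]
  decide +kernel

theorem w₄_eq :
    w₄ =
    !![1, 0, 0, 0, 0, 0; 0, 1, 0, 0, 0, 0; 0, 18, -17, 27, 0, 0;
       0, 12, -12, 19, 0, 0; 0, 6, -6, 9, 1, 0; 0, 0, 0, 0, 0, 1] := by
  rw [w₄, show (-3 : ℤ) = -((3 : ℕ) : ℤ) from rfl, mul_zpow_neg, b_inv, b_eq, c_eq]
  decide +kernel

theorem w₄_sq_zero : (w₄ - 1) * (w₄ - 1) = 0 := by
  rw [w₄_eq]
  decide +kernel

theorem w₅_eq :
    w₅ =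
    !![1, -9, 9, 0, 0, -27/2; 0, 1, 0, 0, 0, 0; 0, 0, 1, 0, 0, 0;
       0, 3, 0, 1, 0, 9/2; 0, 3/2, -3/2, 0, 1, 9/4; 0, 0, 0, 0, 0, 1] := by
  rw [w₅, inv_of_sq_zero _ c_sq_zero, w₂_eq, c_eq]
  decide +kernel

theorem w₅_sq_zero : (w₅ - 1) * (w₅ - 1) = 0 := by
  rw [w₅_eq]
  decide +kernel

theorem w₆_eq :
    w₆ =
    !![1, -81, 0, 27, 0, -243/2; 0, 1, 0, 0, 0, 0; 0, -9, 1, 0, 0, -27/2;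
       0, 0, 0, 1, 0, 0; 0, 27/2, 0, -9/2, 1, 81/4; 0, 0, 0, 0, 0, 1] := by
  rw [w₆, com, w₁_inv, inv_of_sq_zero _ w₅_sq_zero, w₁_eq, w₅_eq]
  decide +kernel

theorem w₆_sq_zero : (w₆ - 1) * (w₆ - 1) = 0 := by
  rw [w₆_eq]
  decide +kernel

theorem w₇_eq :
    w₇ =
    !![1, -36, 36, 0, 0, -54; 0, 1, 0, 0, 0, 0; 0, 0, 1, 0, 0, 0;
       0, 12, 0, 1, 0, 18; 0, 6, -6, 0, 1, 9; 0, 0, 0, 0, 0, 1] := by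
  rw [w₇, pow_of_sq_zero _ w₅_sq_zero, w₅_eq]
  decide +kernel

theorem w₇_sq_zero : (w₇ - 1) * (w₇ - 1) = 0 := by
  rw [w₇_eq]
  decide +kernel

theorem w₈_eq :
    w₈ =
    !![1, -3, 3, -6, 0, -3/2; 0, 1, 0, 0, 0, 0; 0, 6, -5, 12, 0, 3;
       0, 3, -3, 7, 0, 3/2; 0, 3/2, -3/2, 3, 1, 3/4; 0, 0, 0, 0, 0, 1] := by
  rw [w₈, show (-2 : ℤ) = -((2 : ℕ) : ℤ) from rfl, mul_zpow_neg, b_inv, b_eq, c_eq]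
  decide +kernel

theorem w₈_sq_zero : (w₈ - 1) * (w₈ - 1) = 0 := by
  rw [w₈_eq]
  decide +kernel

theorem w₉_eq :
    w₉ =
    !![1, 567, 162, -243, 0, 2187/2; 0, 1, 0, 0, 0, 0; 0, 81, 1, 0, 0, 243/2;
       0, 54, 0, 1, 0, 81; 0, -135/2, -27, 81/2, 1, -567/4; 0, 0, 0, 0, 0, 1] := by
  rw [w₉, com, inv_of_sq_zero _ w₄_sq_zero, inv_of_sq_zero _ w₅_sq_zero, w₄_eq, w₅_eq]
  decide +kernel

theorem w₁₀_eq :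
    w₁₀ =
    !![1, 212868, 0, -972, 0, 320274; 0, 1, 0, 0, 0, 0; 0, 324, 1, 0, 0, 486;
       0, 0, 0, 1, 0, 0; 0, -35370, 0, 162, 1, -53217; 0, 0, 0, 0, 0, 1] := by
  rw [w₁₀, zpow_of_sq_zero _ w₇_sq_zero, w₉_eq, w₇_eq]
  decide +kernel

theorem w₁₁_eq :
    w₁₁ =
    !![1, -324, 0, 108, 0, -486; 0, 1, 0, 0, 0, 0; 0, -36, 1, 0, 0, -54;
       0, 0, 0, 1, 0, 0; 0, 54, 0, -18, 1, 81; 0, 0, 0, 0, 0, 1] := by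
  rw [w₁₁, pow_of_sq_zero _ w₆_sq_zero, w₆_eq]
  decide +kernel

theorem w₁₁_sq_zero : (w₁₁ - 1) * (w₁₁ - 1) = 0 := by
  rw [w₁₁_eq]
  decide +kernel

theorem w₁₂_eq :
    w₁₂ =
    !![1, 209952, 0, 0, 0, 315900; 0, 1, 0, 0, 0, 0; 0, 0, 1, 0, 0, 0;
       0, 0, 0, 1, 0, 0; 0, -34884, 0, 0, 1, -52488; 0, 0, 0, 0, 0, 1] := by
  rw [w₁₂, pow_of_sq_zero _ w₁₁_sq_zero, w₁₁_eq, w₁₀_eq]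
  decide +kernel

theorem w₁₂_sq_zero : (w₁₂ - 1) * (w₁₂ - 1) = 0 := by
  rw [w₁₂_eq]
  decide +kernel

theorem w₁₃_eq :
    w₁₃ =
    !![1, -252, -54, 108, 0, -432; 0, 1, 0, 0, 0, 0; 0, -36, 1, 0, 0, -54;
       0, -18, 0, 1, 0, -27; 0, 36, 9, -18, 1, 63; 0, 0, 0, 0, 0, 1] := by
  rw [w₁₃, com, inv_of_sq_zero _ w₅_sq_zero, inv_of_sq_zero _ w₈_sq_zero, w₅_eq, w₈_eq]
  decide +kernel

theorem w₁₄_eq :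
    w₁₄ =
    !![1, 7812, 0, 0, 0, 11610; 0, 1, 0, 0, 0, 0; 0, 0, 1, 0, 0, 0;
       0, 0, 0, 1, 0, 0; 0, -1314, 0, 0, 1, -1953; 0, 0, 0, 0, 0, 1] := by
  rw [w₁₄, pow_of_sq_zero _ w₇_sq_zero, zpow_of_sq_zero _ w₁₁_sq_zero, w₁₃_eq, w₇_eq, w₁₁_eq]
  decide +kernel

theorem w₁₄_sq_zero : (w₁₄ - 1) * (w₁₄ - 1) = 0 := by
  rw [w₁₄_eq]
  decide +kernel

theorem w₁₅_eq :
    w₁₅ =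
    !![1, -186840, 0, 0, 0, -560520; 0, 1, 0, 0, 0, 0; 0, 0, 1, 0, 0, 0;
       0, 0, 0, 1, 0, 0; 0, 0, 0, 0, 1, 46710; 0, 0, 0, 0, 0, 1] := by
  rw [w₁₅, pow_of_sq_zero _ w₁₄_sq_zero, zpow_of_sq_zero _ w₁₂_sq_zero, w₁₄_eq, w₁₂_eq]
  decide +kernel

theorem w₁₅_sq_zero : (w₁₅ - 1) * (w₁₅ - 1) = 0 := by
  rw [w₁₅_eq]
  decide +kernel

theorem w₁₆_eq :
    w₁₆ =
    !![1, 1681560, 0, 0, -1121040, 52362096840; 0, 1, 0, 0, 0, -280260; 0, 0, 1, 0, 0, 0;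
       0, 0, 0, 1, 0, 0; 0, 0, 0, 0, 1, -420390; 0, 0, 0, 0, 0, 1] := by
  rw [w₁₆, com, inv_of_sq_zero _ w₃_sq_zero, inv_of_sq_zero _ w₁₅_sq_zero, w₃_eq, w₁₅_eq]
  decide +kernel

theorem w₁₇_eq :
    w₁₇ =
    !![1, 0, 0, 0, -1121040, 523631057760; 0, 1, 0, 0, 0, -280260; 0, 0, 1, 0, 0, 0;
       0, 0, 0, 1, 0, 0; 0, 0, 0, 0, 1, 0; 0, 0, 0, 0, 0, 1] := by
  rw [w₁₇, pow_of_sq_zero _ w₁₅_sq_zero, w₁₅_eq, w₁₆_eq]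
  decide +kernel

theorem w₁₇_sq_zero : (w₁₇ - 1) * (w₁₇ - 1) = 0 := by
  rw [w₁₇_eq]
  decide +kernel

theorem w₁₈_eq :
    w₁₈ =
    !![1, 1494720, 0, 0, 0, -104723072640; 0, 1, 0, 0, 0, 0; 0, 0, 1, 0, 0, 0;
       0, 0, 0, 1, 0, 0; 0, 0, 0, 0, 1, -373680; 0, 0, 0, 0, 0, 1] := by
  rw [w₁₈, inv_of_sq_zero _ w₃_sq_zero, inv_of_sq_zero _ w₁₇_sq_zero, w₃_eq, w₁₅_eq, w₁₇_eq]
  decide +kernel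

theorem q₁_eq :
    q₁ =
    !![1, 0, 0, 0, 0, 104727556800; 0, 1, 0, 0, 0, 0; 0, 0, 1, 0, 0, 0;
       0, 0, 0, 1, 0, 0; 0, 0, 0, 0, 1, 0; 0, 0, 0, 0, 0, 1] := by
  rw [q₁, pow_of_sq_zero _ w₁₅_sq_zero, w₁₅_eq, w₁₈_eq]
  apply Matrix.inv_eq_right_inv
  decide +kernel

theorem q₁_sq_zero : (q₁ - 1) * (q₁ - 1) = 0 := by
  rw [q₁_eq]
  decide +kernel

/-- q₁ = (w₁₅⁸ w₁₈)⁻¹ equals I + 104727556800·E₁₆ and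
q₂ = w₁₇^(−15570) · q₁^77849 equals I + 17454592800·E₁₅ + 4363648200·E₂₆. -/
theorem stmt_13 :
    q₁ =
      !![1,0,0,0,0,104727556800; 0,1,0,0,0,0; 0,0,1,0,0,0;
         0,0,0,1,0,0; 0,0,0,0,1,0; 0,0,0,0,0,1] ∧
    w₁₇ ^ (-15570 : ℤ) * q₁ ^ 77849 =
      !![1,0,0,0,17454592800,0; 0,1,0,0,0,4363648200; 0,0,1,0,0,0;
         0,0,0,1,0,0; 0,0,0,0,1,0; 0,0,0,0,0,1] := by
  refine ⟨q₁_eq, ?_⟩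
  rw [zpow_of_sq_zero _ w₁₇_sq_zero, pow_of_sq_zero _ q₁_sq_zero, w₁₇_eq, q₁_eq]
  decide +kernel
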